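/- Let H be a real inner product space with inner product (·,·) and induced norm ‖·‖. Fix an integer k ≥ 1 and real numbers γ, τ > 0 and c₀ ≥ 0. Let B, C : H × H → ℝ be bilinear maps with B symmetric and B(x, x) ≥ 0 for all x ∈ H, and with |C(x, y)| ≤ c₀ ‖x‖ ‖y‖ for all x, y ∈ H; set D := B − C. For families of vectors v₁⁻, …, v_k⁻ and v₁⁺, …, v_k⁺ in H, set v̄_i := (v_i⁺ + v_i⁻)/2 and m_i := (v̄_i, v̄_i); say that the step equations hold for D if for every 1 ≤ i ≤ k and every χ ∈ H one has (γτ)⁻¹ (v_i⁺ − v_i⁻, χ) = −m_i D(v̄_i, χ) + (v̄_i, χ) D(v̄_i, v̄_i) + Σ_{l<i} m_i (v_l⁺, χ) D(v̄_i, v_l⁺) + Σ_{l>i} m_i (v_l⁻, χ) D(v̄_i, v_l⁻); and say that the step is nondegenerate for D if (τγ)⁻¹ ≠ (1/2) D(v̄_i, v̄_i) for every 1 ≤ i ≤ k. Suppose (v_i⁻, v_j⁻) = δ_{ij} for all 1 ≤ i, j ≤ k, the step equations hold for D, and the step is nondegenerate for D. Then for every 1 ≤ i ≤ k, ‖v_i⁺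 − v_i⁻‖² ≤ γ τ ( (1/2) B(v_i⁻, v_i⁻) + 2 c₀ + γ c₀² τ ). -/

import Mathlib

/-!
The scheme updates the vectors one at a time, and at stage `i` the vectors `w l` (equal to `vp l`
for `l < i` and to `vm l` otherwise) form an orthonormal family containing `vm i`. Testing the
equation with `w j`, `j ≠ i`, leaves
`(γτ)⁻¹ (vp i, w j) = (1/2) (vp i, w j) D(v̄, v̄)`, so nondegeneracy gives `vp i ⟂ w j`; testing it
with the midpoint `v̄` then gives `‖vp i‖ = ‖vm i‖ = 1`. By strong induction on `i` this holds at
every stage (`step_orthonormal`).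

Testing with `d = vp i - vm i`, which is orthogonal to `v̄` and to all `w l`, yields
`(γτ)⁻¹ ‖d‖² = -m D(v̄, d)` with `m = ‖v̄‖² ≤ 1`. Since
`B(v̄, d) = (B(vp i, vp i) - B(vm i, vm i)) / 2 ≥ -B(vm i, vm i) / 2` and `‖d‖ ≤ 2`, the right-hand
side is at most `B(vm i, vm i) / 2 + 2 c₀`, which is already stronger than the claimed bound.
-/

open scoped RealInnerProductSpace BigOperators

/-- The midpoint `v̄ᵢ = (vᵢ⁺ + vᵢ⁻)/2` of two families of vectors. -/
noncomputable def midVec {H : Type*} [NormedAddCommGroup H] [InnerProductSpace ℝ H]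
    {k : ℕ} (vm vp : Fin k → H) (i : Fin k) : H :=
  (2 : ℝ)⁻¹ • (vp i + vm i)

/-- One step of the retraction-free orthonormality-preserving scheme: for every `i` and every
test vector `χ`,
`(γτ)⁻¹ (vᵢ⁺ − vᵢ⁻, χ) = −mᵢ D(v̄ᵢ, χ) + (v̄ᵢ, χ) D(v̄ᵢ, v̄ᵢ)
  + Σ_{l<i} mᵢ (v_l⁺, χ) D(v̄ᵢ, v_l⁺) + Σ_{l>i} mᵢ (v_l⁻, χ) D(v̄ᵢ, v_l⁻)`,
where `mᵢ = (v̄ᵢ, v̄ᵢ)`. -/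
def StepEqs {H : Type*} [NormedAddCommGroup H] [InnerProductSpace ℝ H]
    {k : ℕ} (γ τ : ℝ) (vm vp : Fin k → H) (D : H →ₗ[ℝ] H →ₗ[ℝ] ℝ) : Prop :=
  ∀ i : Fin k, ∀ χ : H,
    (γ * τ)⁻¹ * ⟪vp i - vm i, χ⟫ =
      -⟪midVec vm vp i, midVec vm vp i⟫ * D (midVec vm vp i) χ
      + ⟪midVec vm vp i, χ⟫ * D (midVec vm vp i) (midVec vm vp i)
      + ∑ l ∈ Finset.univ.filter (fun l => l < i),
          ⟪midVec vm vp i, midVec vm vp i⟫ * ⟪vp l, χ⟫ * D (midVec vm vp i) (vp l)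
      + ∑ l ∈ Finset.univ.filter (fun l => i < l),
          ⟪midVec vm vp i, midVec vm vp i⟫ * ⟪vm l, χ⟫ * D (midVec vm vp i) (vm l)

/-- Nondegeneracy of one step of the scheme: `(τγ)⁻¹ ≠ (1/2) D(v̄ᵢ, v̄ᵢ)` for every `i`. -/
def StepNondeg {H : Type*} [NormedAddCommGroup H] [InnerProductSpace ℝ H]
    {k : ℕ} (γ τ : ℝ) (vm vp : Fin k → H) (D : H →ₗ[ℝ] H →ₗ[ℝ] ℝ) : Prop :=
  ∀ i : Fin k, (τ * γ)⁻¹ ≠ (1 / 2) * D (midVec vm vp i) (midVec vm vp i)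

section Helpers

variable {H : Type*} [NormedAddCommGroup H] [InnerProductSpace ℝ H] {k : ℕ}

/-- The family in force while the `i`-th vector is being updated: new vectors before `i`, old
vectors from `i` on. -/
def mixedVec (vm vp : Fin k → H) (i l : Fin k) : H :=
  if l < i then vp l else vm l

/-- The step equations with both sums merged into one sum over `l ≠ i`. -/
lemma StepEqs.mixed {γ τ : ℝ} {vm vp : Fin k → H} {D : H →ₗ[ℝ] H →ₗ[ℝ] ℝ}
    (h : StepEqs γ τ vm vp D) (i : Fin k) (χ : H) :
    (γ * τ)⁻¹ * ⟪vp i - vm i, χ⟫ =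
      -⟪midVec vm vp i, midVec vm vp i⟫ * D (midVec vm vp i) χ
      + ⟪midVec vm vp i, χ⟫ * D (midVec vm vp i) (midVec vm vp i)
      + ∑ l ∈ Finset.univ.filter (fun l => l ≠ i),
          ⟪midVec vm vp i, midVec vm vp i⟫ * ⟪mixedVec vm vp i l, χ⟫ *
            D (midVec vm vp i) (mixedVec vm vp i l) := by
  have hsplit : Finset.univ.filter (fun l : Fin k => l ≠ i) =
      Finset.univ.filter (fun l => l < i) ∪ Finset.univ.filter (fun l => i < l) := by
    ext l
    simp [lt_or_lt_iff_ne]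
  have hdisj : Disjoint (Finset.univ.filter (fun l : Fin k => l < i))
      (Finset.univ.filter (fun l => i < l)) := by
    rw [Finset.disjoint_filter]
    exact fun l _ h1 h2 => lt_asymm h1 h2
  rw [h i χ, hsplit, Finset.sum_union hdisj, ← add_assoc]
  congr 1
  · congr 1
    refine Finset.sum_congr rfl fun l hl => ?_
    rw [mixedVec, if_pos (Finset.mem_filter.1 hl).2]
  · refine Finset.sum_congr rfl fun l hl => ?_
    rw [mixedVec, if_neg (Finset.mem_filter.1 hl).2.not_gt]

/-- One stage of the update: if the family in force is orthonormal, then the updated vector is a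
unit vector orthogonal to all the other members of that family. -/
lemma StepEqs.orthonormal_stage {γ τ : ℝ} (hγ : 0 < γ) (hτ : 0 < τ) {vm vp : Fin k → H}
    {D : H →ₗ[ℝ] H →ₗ[ℝ] ℝ} (h : StepEqs γ τ vm vp D) (hnd : StepNondeg γ τ vm vp D) (i : Fin k)
    (hw : ∀ a b, ⟪mixedVec vm vp i a, mixedVec vm vp i b⟫ = if a = b then (1 : ℝ) else 0) :
    ⟪vp i, vp i⟫ = 1 ∧ ∀ l, l ≠ i → ⟪vp i, mixedVec vm vp i l⟫ = 0 := by
  have hwi : mixedVec vm vp i i = vm i := by simp [mixedVec]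
  have hvm : ∀ l, l ≠ i → ⟪vm i, mixedVec vm vp i l⟫ = 0 := fun l hl => by
    rw [← hwi, hw, if_neg hl.symm]
  have hvm1 : ⟪vm i, vm i⟫ = 1 := by rw [← hwi, hw, if_pos rfl]
  have hort : ∀ l, l ≠ i → ⟪vp i, mixedVec vm vp i l⟫ = 0 := by
    intro j hj
    have e := h.mixed i (mixedVec vm vp i j)
    rw [Finset.sum_eq_single j] at e
    · have h1 : ⟪midVec vm vp i, mixedVec vm vp i j⟫ = 2⁻¹ * ⟪vp i, mixedVec vm vp i j⟫ := by
        rw [midVec, real_inner_smul_left, inner_add_left, hvm j hj, add_zero]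
      rw [hw, if_pos rfl, h1, inner_sub_left, hvm j hj] at e
      have h2 : ((τ * γ)⁻¹ - (1 / 2) * D (midVec vm vp i) (midVec vm vp i)) *
          ⟪vp i, mixedVec vm vp i j⟫ = 0 := by
        rw [mul_comm τ γ]
        linear_combination e
      exact (mul_eq_zero.1 h2).resolve_left (sub_ne_zero.2 (hnd i))
    · intro l _ hlj
      rw [hw, if_neg hlj]
      ring
    · intro hj'
      simp [hj] at hj'
  refine ⟨?_, hort⟩
  have e := h.mixed i (midVec vm vp i)
  rw [Finset.sum_eq_zero] at e
  · have h1 : ⟪vp i - vm i, midVec vm vp i⟫ = 2⁻¹ * (⟪vp i, vp i⟫ - 1) := by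
      rw [midVec, real_inner_smul_right, inner_sub_left, inner_add_right, inner_add_right, hvm1,
        real_inner_comm (vp i) (vm i)]
      ring
    rw [h1] at e
    have hpos : (γ * τ)⁻¹ ≠ 0 := by positivity
    have h2 : (γ * τ)⁻¹ * (⟪vp i, vp i⟫ - 1) = 0 := by linear_combination 2 * e
    exact sub_eq_zero.1 ((mul_eq_zero.1 h2).resolve_left hpos)
  · intro l hl
    have hl' := (Finset.mem_filter.1 hl).2
    have h0 : ⟪mixedVec vm vp i l, midVec vm vp i⟫ = 0 := by
      rw [midVec, real_inner_smul_right, inner_add_right, real_inner_comm (vp i),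
        real_inner_comm (vm i), hort l hl', hvm l hl', add_zero, mul_zero]
    rw [h0]
    ring

/-- Orthonormality is preserved at every stage of the step. -/
lemma step_orthonormal {γ τ : ℝ} (hγ : 0 < γ) (hτ : 0 < τ) {vm vp : Fin k → H}
    {D : H →ₗ[ℝ] H →ₗ[ℝ] ℝ} (h : StepEqs γ τ vm vp D) (hnd : StepNondeg γ τ vm vp D)
    (horth : ∀ i j : Fin k, ⟪vm i, vm j⟫ = if i = j then (1 : ℝ) else 0) (i : Fin k) :
    (⟪vp i, vp i⟫ = 1 ∧ ∀ l, l ≠ i → ⟪vp i, mixedVec vm vp i l⟫ = 0) ∧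
      ∀ l, l ≠ i → ⟪vm i, mixedVec vm vp i l⟫ = 0 := by
  induction i using WellFoundedLT.induction with
  | ind i ih =>
  have hpp : ∀ a b, a < i → b < a → ⟪vp a, vp b⟫ = 0 := fun a b ha hb => by
    have := (ih a ha).1.2 b hb.ne
    rwa [mixedVec, if_pos hb] at this
  have hpm : ∀ a b, a < i → a < b → ⟪vp a, vm b⟫ = 0 := fun a b ha hb => by
    have := (ih a ha).1.2 b hb.ne'
    rwa [mixedVec, if_neg hb.not_gt] at this
  have hw : ∀ a b, ⟪mixedVec vm vp i a, mixedVec vm vp i b⟫ = if a = b then (1 : ℝ) else 0 := by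
    intro a b
    rcases eq_or_ne a b with rfl | hab
    · rw [if_pos rfl, mixedVec]
      split_ifs with ha
      · exact (ih a ha).1.1
      · rw [horth, if_pos rfl]
    · rw [if_neg hab, mixedVec, mixedVec]
      split_ifs with ha hb hb
      · rcases hab.lt_or_gt with hlt | hlt
        · rw [real_inner_comm]
          exact hpp b a hb hlt
        · exact hpp a b ha hlt
      · exact hpm a b ha (ha.trans_le (not_lt.1 hb))
      · rw [real_inner_comm]
        exact hpm b a hb (hb.trans_le (not_lt.1 ha))
      · rw [horth, if_neg hab]
  refine ⟨h.orthonormal_stage hγ hτ hnd i hw, fun l hl => ?_⟩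
  have := hw i l
  rwa [if_neg hl.symm, mixedVec, if_neg (lt_irrefl i)] at this

end Helpers

/-- discrete increment bound, abstract form of estimate (5.1). With
`D = B − C`, `B` symmetric positive semidefinite, `|C(x,y)| ≤ c₀‖x‖‖y‖`, orthonormal old
family, step equations and nondegeneracy, one step of the scheme moves each auxiliary variable
by at most `O(√τ)`:
`‖vᵢ⁺ − vᵢ⁻‖² ≤ γτ ((1/2) B(vᵢ⁻, vᵢ⁻) + 2c₀ + γ c₀² τ)`. -/
theorem stmt_10 {H : Type*} [NormedAddCommGroup H] [InnerProductSpace ℝ H]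
    (k : ℕ) (hk : 1 ≤ k) (γ τ c₀ : ℝ) (hγ : 0 < γ) (hτ : 0 < τ) (hc₀ : 0 ≤ c₀)
    (B C : H →ₗ[ℝ] H →ₗ[ℝ] ℝ) (hBsymm : ∀ x y : H, B x y = B y x)
    (hBpos : ∀ x : H, 0 ≤ B x x)
    (hC : ∀ x y : H, |C x y| ≤ c₀ * ‖x‖ * ‖y‖)
    (vm vp : Fin k → H)
    (horth : ∀ i j : Fin k, ⟪vm i, vm j⟫ = if i = j then (1 : ℝ) else 0)
    (hstep : StepEqs γ τ vm vp (B - C))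
    (hnd : StepNondeg γ τ vm vp (B - C)) :
    ∀ i : Fin k,
      ‖vp i - vm i‖ ^ 2 ≤ γ * τ * ((1 / 2) * B (vm i) (vm i) + 2 * c₀ + γ * c₀ ^ 2 * τ) := by
  intro i
  obtain ⟨⟨hp1, hpw⟩, hmw⟩ := step_orthonormal hγ hτ hstep hnd horth i
  have hm1 : ⟪vm i, vm i⟫ = 1 := by rw [horth, if_pos rfl]
  set d := vp i - vm i with hd
  set v := midVec vm vp i with hv
  have hvd : ⟪v, d⟫ = 0 := by
    rw [hv, hd, midVec, real_inner_smul_left, inner_add_left, inner_sub_right, inner_sub_right,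
      hp1, hm1, real_inner_comm (vp i) (vm i)]
    ring
  have hnp : ‖vp i‖ = 1 := by
    rw [norm_eq_sqrt_real_inner, hp1, Real.sqrt_one]
  have hnm : ‖vm i‖ = 1 := by
    rw [norm_eq_sqrt_real_inner, hm1, Real.sqrt_one]
  have hnd2 : ‖d‖ ≤ 2 := by
    have := norm_sub_le (vp i) (vm i)
    rw [hnp, hnm] at this
    linarith
  have hnv : ‖v‖ ≤ 1 := by
    have := norm_add_le (vp i) (vm i)
    rw [hnp, hnm] at this
    rw [hv, midVec, norm_smul, Real.norm_of_nonneg (by norm_num)]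
    linarith
  have hBd : B v d = (1 / 2) * (B (vp i) (vp i) - B (vm i) (vm i)) := by
    rw [hv, hd, midVec]
    simp only [map_smul, map_add, map_sub, LinearMap.smul_apply, LinearMap.add_apply, smul_eq_mul]
    rw [hBsymm (vm i) (vp i)]
    ring
  have hCd : C v d ≤ 2 * c₀ := by
    calc C v d ≤ c₀ * ‖v‖ * ‖d‖ := (le_abs_self _).trans (hC v d)
      _ ≤ c₀ * 1 * 2 := by gcongr
      _ = 2 * c₀ := by ring
  have e := hstep.mixed i d
  rw [← hv, Finset.sum_eq_zero, hvd, real_inner_self_eq_norm_sq, ← hd,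
    real_inner_self_eq_norm_sq] at e
  · have hm0 : 0 ≤ ‖v‖ ^ 2 := by positivity
    have hm : ‖v‖ ^ 2 ≤ 1 := pow_le_one₀ (norm_nonneg _) hnv
    have hK : 0 ≤ (1 / 2) * B (vm i) (vm i) + 2 * c₀ := by
      have := hBpos (vm i)
      positivity
    have hD : -(B - C) v d ≤ (1 / 2) * B (vm i) (vm i) + 2 * c₀ := by
      have := hBpos (vp i)
      simp only [LinearMap.sub_apply]
      linarith
    have hle : (γ * τ)⁻¹ * ‖d‖ ^ 2 ≤ (1 / 2) * B (vm i) (vm i) + 2 * c₀ := by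
      calc (γ * τ)⁻¹ * ‖d‖ ^ 2 = ‖v‖ ^ 2 * (-(B - C) v d) := by rw [e]; ring
        _ ≤ ‖v‖ ^ 2 * ((1 / 2) * B (vm i) (vm i) + 2 * c₀) := by gcongr
        _ ≤ (1 / 2) * B (vm i) (vm i) + 2 * c₀ := mul_le_of_le_one_left hK hm
    rw [inv_mul_le_iff₀ (by positivity)] at hle
    refine hle.trans (mul_le_mul_of_nonneg_left ?_ (by positivity))
    have : 0 ≤ γ * c₀ ^ 2 * τ := by positivity
    linarith
  · intro l hl
    have hl' := (Finset.mem_filter.1 hl).2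
    rw [hd, inner_sub_right, real_inner_comm (vp i), real_inner_comm (vm i), hpw l hl', hmw l hl']
    ring
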